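/- arXiv:1506.08382 — 2 statements merged into one kernel-verified Lean document; each statement's English description precedes it below -/
import Mathlib

section
/- For every real number c > 1, f(1,c) lies in the open interval (0,1), satisfies f(1,c) = e^{-c(1 - f(1,c))}, and is the unique z ∈ (0,1) satisfying z = e^{-c(1-z)}. -/
/-- `f m c = ∑_{k=0}^∞ (km+1)^{k-1} c^k e^{-c(km+1)/m} / (m^k k!)`, where the factor
`(km+1)^{k-1}` for `k = 0` is interpreted as `1` (here via `ℕ`-subtraction in the exponent,
which gives `(0·m+1)^0 = 1`). -/
noncomputable def f (m c : ℝ) : ℝ :=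
  ∑' k : ℕ, ((k : ℝ) * m + 1) ^ (k - 1) * c ^ k *
    Real.exp (-c * ((k : ℝ) * m + 1) / m) / (m ^ k * (Nat.factorial k : ℝ))

/-! With `a = 1/m`, the series is `f m c = e^{-ac} ∑ a (a+k)^{k-1}/k! (c e^{-c})^k`. Abel's identity
evaluates it at `x = u e^{-u}`: the sum is `e^{au}` whenever `0 ≤ u < 1`. For `u` near `0` one
expands `e^{-(a+k)u}` and regroups the resulting double series by total degree `n` in `u`; the
degree-`n` part is an `n`-th difference of a polynomial of degree `n - 1`, hence vanishes for
`n ≥ 1`. Both sides being analytic in `u`, the identity persists as long as `u e^{-u}` stays inside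
the disc of convergence `|x| < e^{-1}`, that is, up to `u = 1`. For `c > 1` the point `c e^{-c}` is
also `u e^{-u}` for a unique `u < 1`, so that `f m c = e^{(u-c)/m}`, and `y ↦ c y ^ m` turns the
solutions of `y = e^{-c(1-y^m)/m}` in `(0, 1)` into such `u`. -/

open Finset Filter Topology

theorem tsum_eq_tsum_sum_antidiagonal {A α : Type*} [AddMonoid A] [HasAntidiagonal A]
    [AddCommGroup α] [UniformSpace α] [IsUniformAddGroup α] [CompleteSpace α] [T2Space α]
    {g : A × A → α} (hg : Summable g) :
    ∑' p, g p = ∑' n, ∑ p ∈ antidiagonal n, g p := by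
  have hg' := HasAntidiagonal.sigmaAntidiagonalEquivProd.summable_iff.2 hg
  rw [← HasAntidiagonal.sigmaAntidiagonalEquivProd.tsum_eq]
  refine hg'.tsum_sigma.trans (tsum_congr fun n ↦ ?_)
  rw [tsum_fintype]
  exact sum_coe_sort (antidiagonal n) g

theorem analyticAt_tsum_mul_pow {𝕜 : Type*} [NontriviallyNormedField 𝕜] [CompleteSpace 𝕜]
    {b : ℕ → 𝕜} {C r : ℝ} (hb : ∀ k, ‖b k‖ * r ^ k ≤ C) {x : 𝕜} (hx : ‖x‖ < r) :
    AnalyticAt 𝕜 (fun y ↦ ∑' k, b k * y ^ k) x := by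
  have hr : 0 < r := (norm_nonneg x).trans_lt hx
  let p := FormalMultilinearSeries.ofScalars 𝕜 b
  have hradius : ENNReal.ofReal r ≤ p.radius :=
    p.le_radius_of_bound C fun k ↦ by
      simpa only [p, Real.coe_toNNReal r hr.le, FormalMultilinearSeries.ofScalars_norm] using hb k
  have hsum : p.sum = fun y ↦ ∑' k, b k * y ^ k :=
    FormalMultilinearSeries.ofScalarsSum_eq_tsum b
  rw [← hsum]
  refine (p.hasFPowerSeriesOnBall
    ((ENNReal.ofReal_pos.2 hr).trans_le hradius)).analyticAt_of_mem ?_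
  rw [Metric.mem_eball, edist_zero_right, ← ofReal_norm]
  exact ((ENNReal.ofReal_lt_ofReal_iff hr).2 hx).trans_le hradius

theorem hasSum_pow_div_factorial (x : ℝ) :
    HasSum (fun j : ℕ ↦ x ^ j / (j.factorial : ℝ)) (Real.exp x) := by
  rw [Real.exp_eq_exp_ℝ]
  exact NormedSpace.expSeries_div_hasSum_exp x

theorem sum_range_neg_one_pow_mul_choose_mul_add_pow {R : Type*} [CommRing R] (y : R) {i n : ℕ}
    (h : i < n) : ∑ k ∈ range (n + 1), (-1) ^ (n - k) * (n.choose k : R) * (y + k) ^ i = 0 := by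
  have hdiff := congrFun (fwdDiff_iter_pow_eq_zero_of_lt (R := R) h) y
  simpa [fwdDiff_iter_eq_sum_shift] using hdiff

section MulExpNeg

variable {u c : ℝ}

theorem mul_exp_neg_lt_exp_neg_one (hu : u ≠ 1) : u * Real.exp (-u) < Real.exp (-1) := by
  calc u * Real.exp (-u) < Real.exp (u - 1) * Real.exp (-u) := by
        gcongr
        simpa using Real.add_one_lt_exp (sub_ne_zero.2 hu)
    _ = Real.exp (-1) := by
        rw [← Real.exp_add]
        ring_nf

theorem mul_exp_neg_eq_iff : u * Real.exp (-u) = c * Real.exp (-c) ↔ u = c * Real.exp (u - c) := by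
  rw [Real.exp_sub, Real.exp_neg, Real.exp_neg]
  field_simp

theorem lt_one_of_mul_exp_neg_eq (hu : 0 < u) (huc : u < c)
    (h : u * Real.exp (-u) = c * Real.exp (-c)) : u < 1 := by
  have hratio : c / u = Real.exp (c - u) := by
    rw [div_eq_iff hu.ne', mul_comm, ← mul_exp_neg_eq_iff, h]
  have hlt : c - u + 1 < c / u := hratio ▸ Real.add_one_lt_exp (sub_pos.2 huc).ne'
  rw [lt_div_iff₀ hu] at hlt
  have hprod : (c - u) * (u - 1) < 0 := by linear_combination hlt
  exact sub_neg.1 (neg_of_mul_neg_right hprod (sub_pos.2 huc).le)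

theorem exists_mem_Ioo_mul_exp_neg_eq (hc : 1 < c) :
    ∃ u ∈ Set.Ioo (0 : ℝ) 1, u * Real.exp (-u) = c * Real.exp (-c) := by
  have hcont : ContinuousOn (fun v : ℝ ↦ v * Real.exp (-v)) (Set.Icc 0 1) := by fun_prop
  refine intermediate_value_Ioo zero_le_one hcont ⟨?_, ?_⟩
  · rw [zero_mul]
    positivity
  · rw [one_mul]
    exact mul_exp_neg_lt_exp_neg_one hc.ne'

end MulExpNeg

section AbelSeries

/-- The coefficient `a (a + k) ^ (k - 1) / k!` of Abel's series, written without subtraction in the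
exponent so that `k = 0` needs no separate convention when `a ≠ 0`. -/
noncomputable def abelCoeff (a : ℝ) (k : ℕ) : ℝ :=
  a / (a + k) * ((a + k) ^ k / (k.factorial : ℝ))

/-- Abel's series `∑ a (a + k) ^ (k - 1) / k! * x ^ k`, the `a`-th power of the exponential of the
tree function. -/
noncomputable def abelSeries (a x : ℝ) : ℝ := ∑' k, abelCoeff a k * x ^ k

/-- The terms of the double series obtained from `∑ abelCoeff a k * u ^ k * exp (-(a + k) * u)` by
expanding the exponentials. -/
noncomputable def abelTerm (a u : ℝ) (p : ℕ × ℕ) : ℝ :=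
  abelCoeff a p.1 * u ^ p.1 * ((-(a + p.1) * u) ^ p.2 / (p.2.factorial : ℝ))

variable {a u : ℝ}

theorem abelCoeff_nonneg (ha : 0 ≤ a) (k : ℕ) : 0 ≤ abelCoeff a k := by
  unfold abelCoeff
  positivity

theorem abelCoeff_le_exp (ha : 0 ≤ a) (k : ℕ) : abelCoeff a k ≤ Real.exp (a + k) := by
  have hak : 0 ≤ a + k := by positivity
  calc abelCoeff a k
      ≤ 1 * ((a + k) ^ k / (k.factorial : ℝ)) := by
        unfold abelCoeff
        gcongr
        exact div_le_one_of_le₀ (le_add_of_nonneg_right k.cast_nonneg) hak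
    _ ≤ Real.exp (a + k) := by
        rw [one_mul]
        exact Real.pow_div_factorial_le_exp _ hak k

theorem analyticAt_abelSeries (ha : 0 ≤ a) {x : ℝ} (hx : |x| < Real.exp (-1)) :
    AnalyticAt ℝ (abelSeries a) x := by
  refine analyticAt_tsum_mul_pow (C := Real.exp a) (fun k ↦ ?_) hx
  rw [Real.norm_of_nonneg (abelCoeff_nonneg ha k)]
  calc abelCoeff a k * Real.exp (-1) ^ k
      ≤ Real.exp (a + k) * Real.exp (-1) ^ k := by
        gcongr
        exact abelCoeff_le_exp ha k
    _ = Real.exp a := by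
        rw [← Real.exp_nat_mul, ← Real.exp_add]
        ring_nf

theorem norm_abelTerm (ha : 0 ≤ a) (k j : ℕ) :
    ‖abelTerm a u (k, j)‖ =
      abelCoeff a k * |u| ^ k * (((a + k) * |u|) ^ j / (j.factorial : ℝ)) := by
  have hak : 0 ≤ a + k := by positivity
  simp only [abelTerm, norm_mul, norm_div, norm_pow, norm_neg, Real.norm_eq_abs, Nat.abs_cast,
    abs_of_nonneg hak, abs_of_nonneg (abelCoeff_nonneg ha k)]

theorem summable_abelTerm (ha : 0 ≤ a) (hu : |u| * Real.exp (1 + |u|) < 1) :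
    Summable (abelTerm a u) := by
  refine Summable.of_norm ((summable_prod_of_nonneg fun _ ↦ norm_nonneg _).2 ⟨fun k ↦ ?_, ?_⟩)
  · simp only [norm_abelTerm ha]
    exact (hasSum_pow_div_factorial _).summable.mul_left _
  simp only [norm_abelTerm ha, tsum_mul_left, (hasSum_pow_div_factorial _).tsum_eq]
  refine Summable.of_nonneg_of_le (fun k ↦ ?_) (fun k ↦ ?_)
    ((summable_geometric_of_lt_one (by positivity) hu).mul_left (Real.exp (a * (1 + |u|))))
  · have := abelCoeff_nonneg ha k
    positivity
  calc abelCoeff a k * |u| ^ k * Real.exp ((a + k) * |u|)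
      ≤ Real.exp (a + k) * |u| ^ k * Real.exp ((a + k) * |u|) := by
        gcongr
        exact abelCoeff_le_exp ha k
    _ = |u| ^ k * Real.exp (a * (1 + |u|) + k * (1 + |u|)) := by
        rw [mul_right_comm, ← Real.exp_add]
        ring_nf
    _ = Real.exp (a * (1 + |u|)) * (|u| * Real.exp (1 + |u|)) ^ k := by
        rw [mul_pow, ← Real.exp_nat_mul, Real.exp_add]
        ring

theorem tsum_abelTerm (h : Summable (abelTerm a u)) :
    ∑' p, abelTerm a u p = abelSeries a (u * Real.exp (-u)) * Real.exp (-(a * u)) := by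
  rw [h.tsum_prod, abelSeries, ← tsum_mul_right]
  refine tsum_congr fun k ↦ ?_
  have hexp : Real.exp (-(a + k) * u) = Real.exp (-u) ^ k * Real.exp (-(a * u)) := by
    rw [← Real.exp_nat_mul, ← Real.exp_add]
    ring_nf
  simp only [abelTerm, tsum_mul_left, (hasSum_pow_div_factorial _).tsum_eq, hexp]
  ring

theorem abelTerm_eq_choose (ha : 0 < a) (k j : ℕ) (h : k + j ≠ 0) :
    abelTerm a u (k, j) = a * u ^ (k + j) / ((k + j).factorial : ℝ) *
      ((-1) ^ j * ((k + j).choose k : ℝ) * (a + k) ^ (k + j - 1)) := by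
  have hak : a + k ≠ 0 := by positivity
  have hpow : (a + k) ^ k * (a + k) ^ j = (a + k) * (a + k) ^ (k + j - 1) := by
    rw [← pow_add, mul_pow_sub_one h]
  calc abelTerm a u (k, j)
      = a * u ^ (k + j) * (-1) ^ j / ((k.factorial : ℝ) * (j.factorial : ℝ)) *
          (((a + k) ^ k * (a + k) ^ j) / (a + k)) := by
        simp only [abelTerm, abelCoeff]
        rw [neg_mul, neg_pow, mul_pow, pow_add]
        field_simp
    _ = _ := by
        rw [hpow, mul_div_cancel_left₀ _ hak, Nat.cast_add_choose]
        field_simp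

theorem sum_antidiagonal_abelTerm (ha : 0 < a) (n : ℕ) :
    ∑ p ∈ antidiagonal n, abelTerm a u p = if n = 0 then 1 else 0 := by
  rcases eq_or_ne n 0 with rfl | hn
  · simp [abelTerm, abelCoeff, ha.ne']
  have hterm : ∀ k ∈ range (n + 1), abelTerm a u (k, n - k) =
      a * u ^ n / (n.factorial : ℝ) * ((-1) ^ (n - k) * (n.choose k : ℝ) * (a + k) ^ (n - 1)) := by
    intro k hk
    have hkn : k + (n - k) = n := Nat.add_sub_cancel' (mem_range_succ_iff.1 hk)
    simpa only [hkn] using abelTerm_eq_choose ha k (n - k) (hkn.trans_ne hn)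
  rw [if_neg hn, Nat.sum_antidiagonal_eq_sum_range_succ_mk, sum_congr rfl hterm, ← mul_sum,
    sum_range_neg_one_pow_mul_choose_mul_add_pow a (Nat.sub_one_lt hn), mul_zero]

theorem abelSeries_mul_exp_neg_of_abs_mul_exp_lt_one (ha : 0 < a)
    (hu : |u| * Real.exp (1 + |u|) < 1) :
    abelSeries a (u * Real.exp (-u)) = Real.exp (a * u) := by
  have hsummable := summable_abelTerm ha.le hu
  have hone : abelSeries a (u * Real.exp (-u)) * Real.exp (-(a * u)) = 1 := by
    rw [← tsum_abelTerm hsummable, tsum_eq_tsum_sum_antidiagonal hsummable]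
    simp only [sum_antidiagonal_abelTerm ha, tsum_ite_eq]
  rwa [Real.exp_neg (a * u), mul_inv_eq_one₀ (Real.exp_ne_zero _)] at hone

theorem abelSeries_mul_exp_neg (ha : 0 < a) (hu : u ∈ Set.Ico 0 1) :
    abelSeries a (u * Real.exp (-u)) = Real.exp (a * u) := by
  have hleft : AnalyticOnNhd ℝ (fun v ↦ abelSeries a (v * Real.exp (-v))) (Set.Ico 0 1) := by
    intro v hv
    have hdisc : |v * Real.exp (-v)| < Real.exp (-1) := by
      rw [abs_of_nonneg (mul_nonneg hv.1 (Real.exp_pos _).le)]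
      exact mul_exp_neg_lt_exp_neg_one hv.2.ne
    exact (analyticAt_abelSeries ha.le hdisc).fun_comp
      (f := fun v : ℝ ↦ v * Real.exp (-v)) (by fun_prop)
  have hright : AnalyticOnNhd ℝ (fun v ↦ Real.exp (a * v)) (Set.Ico 0 1) := fun v _ ↦ by fun_prop
  have hnear : ∀ᶠ v : ℝ in 𝓝 0, |v| * Real.exp (1 + |v|) < 1 := by
    have hcont : Continuous fun v : ℝ ↦ |v| * Real.exp (1 + |v|) := by fun_prop
    exact hcont.continuousAt.eventually_lt continuousAt_const (by simp)
  exact hleft.eqOn_of_preconnected_of_eventuallyEq hright isPreconnected_Ico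
    (Set.left_mem_Ico.2 one_pos)
    (hnear.mono fun _ ↦ abelSeries_mul_exp_neg_of_abs_mul_exp_lt_one ha) hu

end AbelSeries

section Supercritical

variable {m c : ℝ}

theorem f_eq_abelSeries (hm : 0 < m) :
    f m c = abelSeries m⁻¹ (c * Real.exp (-c)) * Real.exp (-c / m) := by
  rw [f, abelSeries, ← tsum_mul_right]
  refine tsum_congr fun k ↦ ?_
  have hcoeff : ((k : ℝ) * m + 1) ^ (k - 1) / (m ^ k * (k.factorial : ℝ)) = abelCoeff m⁻¹ k := by
    rcases Nat.eq_zero_or_pos k with rfl | hk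
    · simp [abelCoeff, hm.ne']
    have hshift : (k : ℝ) * m + 1 = m * (m⁻¹ + k) := by
      field_simp
      ring
    rw [abelCoeff, hshift, mul_pow, ← mul_pow_sub_one hk.ne' m,
      ← mul_pow_sub_one hk.ne' (m⁻¹ + k)]
    field_simp
  have hexp : Real.exp (-c * ((k : ℝ) * m + 1) / m) = Real.exp (-c) ^ k * Real.exp (-c / m) := by
    rw [← Real.exp_nat_mul, ← Real.exp_add]
    congr 1
    field_simp
    ring
  rw [← hcoeff, hexp]
  ring

theorem f_eq_exp_of_mul_exp_neg_eq {u : ℝ} (hm : 0 < m) (hu : u ∈ Set.Ico 0 1)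
    (h : u * Real.exp (-u) = c * Real.exp (-c)) : f m c = Real.exp ((u - c) / m) := by
  rw [f_eq_abelSeries hm, ← h, abelSeries_mul_exp_neg (inv_pos.2 hm) hu, ← Real.exp_add]
  ring_nf

theorem exp_div_eq_exp_neg_mul_one_sub_rpow {u : ℝ} (hm : m ≠ 0)
    (h : u * Real.exp (-u) = c * Real.exp (-c)) :
    Real.exp ((u - c) / m) = Real.exp (-c * (1 - Real.exp ((u - c) / m) ^ m) / m) := by
  rw [← Real.exp_mul, div_mul_cancel₀ _ hm]
  congr 2
  linear_combination mul_exp_neg_eq_iff.1 h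

theorem eq_f_of_eq_exp_neg_mul_one_sub_rpow {y : ℝ} (hm : 0 < m) (hc : 0 < c)
    (hy : y ∈ Set.Ioo 0 1) (h : y = Real.exp (-c * (1 - y ^ m) / m)) : y = f m c := by
  set u := c * y ^ m with hu
  have hyexp : y = Real.exp ((u - c) / m) := h.trans (by rw [hu]; ring_nf)
  have hypow : y ^ m = Real.exp (u - c) := by
    rw [hyexp, ← Real.exp_mul, div_mul_cancel₀ _ hm.ne']
  have hconj : u * Real.exp (-u) = c * Real.exp (-c) := mul_exp_neg_eq_iff.2 (by rw [← hypow])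
  have hupos : 0 < u := mul_pos hc (Real.rpow_pos_of_pos hy.1 m)
  have huc : u < c := mul_lt_of_lt_one_right hc (Real.rpow_lt_one hy.1.le hy.2 hm)
  have hu1 : u < 1 := lt_one_of_mul_exp_neg_eq hupos huc hconj
  rw [f_eq_exp_of_mul_exp_neg_eq hm ⟨hupos.le, hu1⟩ hconj, ← hyexp]

end Supercritical

theorem f_one_supercritical_general (m c : ℝ) (hm : 0 < m) (hc : 1 < c) :
    f m c ∈ Set.Ioo (0 : ℝ) 1 ∧
      f m c = Real.exp (-c * (1 - f m c ^ m) / m) ∧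
      ∀ y ∈ Set.Ioo (0 : ℝ) 1, y = Real.exp (-c * (1 - y ^ m) / m) → y = f m c := by
  obtain ⟨u, hu, hconj⟩ := exists_mem_Ioo_mul_exp_neg_eq hc
  have hf : f m c = Real.exp ((u - c) / m) :=
    f_eq_exp_of_mul_exp_neg_eq hm (Set.Ioo_subset_Ico_self hu) hconj
  have hneg : (u - c) / m < 0 := div_neg_of_neg_of_pos (sub_neg.2 (hu.2.trans hc)) hm
  refine ⟨?_, ?_, fun y ↦ eq_f_of_eq_exp_neg_mul_one_sub_rpow hm (one_pos.trans hc)⟩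
  · rw [hf]
    exact ⟨Real.exp_pos _, Real.exp_lt_one_iff.2 hneg⟩
  · rw [hf]
    exact exp_div_eq_exp_neg_mul_one_sub_rpow hm.ne' hconj

theorem f_one_supercritical (c : ℝ) (hc : 1 < c) :
    f 1 c ∈ Set.Ioo (0 : ℝ) 1 ∧
      f 1 c = Real.exp (-c * (1 - f 1 c)) ∧
      ∀ z ∈ Set.Ioo (0 : ℝ) 1, z = Real.exp (-c * (1 - z)) → z = f 1 c := by
  simpa only [Real.rpow_one, div_one] using f_one_supercritical_general 1 c one_pos hc
end

section
/- For any positive integers n, p, and q, the number of rooted (p,q)-forests on {1,…,n} equals q(q+np)^{n-1}. Concretely: the number of triples (F, χ, ρ) where F is a forest on {1,…,n} with a distinguished root in each connected component, χ assigns to each edge of F one of p colors, and ρ assigns to each root vertex one of q colors, equals q(q+np)^{n-1}. -/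
/-- A rooted `(p,q)`-forest on the vertex set `Fin n`: an acyclic simple graph together with
a choice of one root vertex in each connected component, an assignment of one of `p` colors
to each edge, and an assignment of one of `q` colors to each root vertex (equivalently, to
each connected component, since roots are in bijection with components). -/
structure RootedPQForest (n p q : ℕ) where
  /-- the underlying simple graph -/
  graph : SimpleGraph (Fin n)
  /-- the graph is a forest, i.e. acyclic -/
  acyclic : graph.IsAcyclic
  /-- a choice of root vertex for each connected component -/
  root : graph.ConnectedComponent → Fin n
  /-- the chosen root belongs to its component -/
  root_mem : ∀ C : graph.ConnectedComponent, graph.connectedComponentMk (root C) = C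
  /-- each edge is assigned one of `p` colors -/
  edgeColor : graph.edgeSet → Fin p
  /-- each root vertex is assigned one of `q` colors -/
  rootColor : graph.ConnectedComponent → Fin q

/-!
A rooted forest is the same thing as a parent map `g : V → Option V` without cycles, where
`g v = none` declares `v` a root: the forest has one component for each root and one edge for each
non-root. Giving every root the weight `q` and every other vertex the weight `p`, it remains to sum
the weights of the acyclic parent maps. Contracting one vertex into its parent leaves an acyclic
parent map on the other vertices, in which the weight of the contracted vertex has moved to its
parent, or to `none` if it was a root. Contraction preserves the sum of all weights, which makes the
total a power of that sum times the weight of `none`, by induction on the number of vertices.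
-/

variable {V W T R : Type*} {g : V → Option V}

/-- The parent relation of a parent map `g`, which sends each vertex to its parent and each root
to `none`. Well-foundedness of this relation expresses that `g` has no cycles (and, if `V` is
infinite, that every vertex has a root above it). -/
def IsParent (g : V → Option V) (u v : V) : Prop :=
  g v = some u

/-- The graph joining every vertex to its parent. -/
def parentGraph (g : V → Option V) : SimpleGraph V :=
  SimpleGraph.fromRel (IsParent g)

lemma IsParent.ne (hg : WellFounded (IsParent g)) {u v : V} (h : IsParent g u v) : u ≠ v := by
  rintro rfl
  exact hg.irrefl.irrefl u h

lemma IsParent.adj (hg : WellFounded (IsParent g)) {u v : V} (h : IsParent g u v) :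
    (parentGraph g).Adj v u :=
  ⟨(h.ne hg).symm, .inr h⟩

/-- The descendants of `v` are closed under adjacency in `G`. -/
lemma reflTransGen_isParent_of_reachable {G : SimpleGraph V} (hG : G ≤ parentGraph g) {v w : V}
    (hv : ∀ u, IsParent g u v → ¬G.Adj v u) (h : G.Reachable v w) :
    Relation.ReflTransGen (IsParent g) v w := by
  rw [SimpleGraph.reachable_iff_reflTransGen] at h
  induction h with
  | refl => exact .refl
  | @tail b c _ hbc ih =>
    obtain ⟨-, hb | hc⟩ := hG hbc
    · exact ih.tail hb
    · obtain rfl | ⟨d, hd, hdb⟩ := ih.cases_tail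
      · exact absurd hbc (hv c hc)
      · obtain rfl : c = d := Option.some_injective _ (hc.symm.trans hdb)
        exact hd

lemma isBridge_parentGraph (hg : WellFounded (IsParent g)) {u v : V} (h : IsParent g u v) :
    (parentGraph g).IsBridge s(v, u) := by
  intro hvu
  have hdesc : Relation.ReflTransGen (IsParent g) v u := by
    refine reflTransGen_isParent_of_reachable (SimpleGraph.deleteEdges_le _) (fun w hw ↦ ?_) hvu
    obtain rfl : u = w := Option.some_injective _ (h.symm.trans hw)
    simp
  exact hg.transGen.irrefl.irrefl v (.tail' hdesc h)

lemma isAcyclic_parentGraph (hg : WellFounded (IsParent g)) : (parentGraph g).IsAcyclic := by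
  rw [SimpleGraph.isAcyclic_iff_forall_adj_isBridge]
  rintro v u ⟨-, h | h⟩
  · exact Sym2.eq_swap ▸ isBridge_parentGraph hg h
  · exact isBridge_parentGraph hg h

lemma eq_of_reachable_parentGraph {u v : V} (hu : g u = none) (hv : g v = none)
    (h : (parentGraph g).Reachable u v) : u = v := by
  have hdesc := reflTransGen_isParent_of_reachable le_rfl (fun w hw ↦ by simp_all [IsParent]) h
  obtain rfl | ⟨w, -, hw⟩ := hdesc.cases_tail
  · rfl
  · simp_all [IsParent]

lemma exists_reachable_parentGraph (hg : WellFounded (IsParent g)) (v : V) :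
    ∃ r, g r = none ∧ (parentGraph g).Reachable v r := by
  induction v using hg.induction with
  | _ v ih =>
    cases hv : g v with
    | none => exact ⟨v, hv, .rfl⟩
    | some u =>
      obtain ⟨r, hr, hur⟩ := ih u hv
      exact ⟨r, hr, (IsParent.adj hg hv).reachable.trans hur⟩

lemma connectedComponentMk_parentGraph_bijective (hg : WellFounded (IsParent g)) :
    Function.Bijective fun r : {r // g r = none} ↦ (parentGraph g).connectedComponentMk r := by
  refine ⟨fun r s h ↦ Subtype.ext ?_, fun C ↦ ?_⟩
  · exact eq_of_reachable_parentGraph r.2 s.2 (SimpleGraph.ConnectedComponent.exact h)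
  · induction C using SimpleGraph.ConnectedComponent.ind with
    | _ v =>
      obtain ⟨r, hr, hvr⟩ := exists_reachable_parentGraph hg v
      exact ⟨⟨r, hr⟩, SimpleGraph.ConnectedComponent.sound hvr.symm⟩

/-- The roots of a well-founded parent map, each identified with its component. -/
noncomputable def rootEquiv (hg : WellFounded (IsParent g)) :
    {r // g r = none} ≃ (parentGraph g).ConnectedComponent :=
  .ofBijective _ (connectedComponentMk_parentGraph_bijective hg)

/-- The edge of `parentGraph g` above a non-root vertex. -/
def parentEdge (hg : WellFounded (IsParent g)) (v : {v // (g v).isSome}) :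
    (parentGraph g).edgeSet :=
  ⟨s(v, (g v).get v.2), IsParent.adj hg (Option.some_get v.2).symm⟩

lemma parentEdge_bijective (hg : WellFounded (IsParent g)) :
    Function.Bijective (parentEdge hg) := by
  refine ⟨fun v w h ↦ Subtype.ext ?_, ?_⟩
  · obtain ⟨hvw, -⟩ | ⟨hv, hw⟩ := Sym2.eq_iff.1 (congrArg Subtype.val h)
    · exact hvw
    · have hwv : IsParent g w v := Option.eq_some_of_isSome v.2 |>.trans (by rw [hw])
      have hvw : IsParent g v w := Option.eq_some_of_isSome w.2 |>.trans (by rw [← hv])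
      exact absurd hvw (hg.asymm.asymm _ _ hwv)
  · have exists_parentEdge {u v : V} (h : IsParent g u v) : ∃ w, (parentEdge hg w).1 = s(v, u) :=
      ⟨⟨v, Option.isSome_of_eq_some h⟩, by simp [parentEdge, show g v = some u from h]⟩
    rintro ⟨⟨u, v⟩, -, h | h⟩
    · obtain ⟨w, hw⟩ := exists_parentEdge h
      exact ⟨w, Subtype.ext (hw.trans Sym2.eq_swap)⟩
    · obtain ⟨w, hw⟩ := exists_parentEdge h
      exact ⟨w, Subtype.ext hw⟩

lemma eq_of_parentGraph_eq {g' : V → Option V} (hg : WellFounded (IsParent g))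
    (hgraph : parentGraph g = parentGraph g') (hroot : ∀ v, g v = none ↔ g' v = none) :
    g = g' := by
  funext v
  induction v using hg.induction with
  | _ v ih =>
    cases hv : g v with
    | none => exact ((hroot v).1 hv).symm
    | some u =>
      have hadj : (parentGraph g').Adj v u := hgraph ▸ IsParent.adj hg hv
      obtain ⟨-, hu | hu⟩ := hadj
      · exact absurd ((ih u hv).trans hu) (hg.asymm.asymm _ _ hv)
      · exact hu.symm

/-- A rooted forest on an arbitrary vertex type, with roots encoded as in `RootedPQForest`. -/
structure RootedForest (V : Type*) where
  /-- the underlying simple graph -/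
  graph : SimpleGraph V
  /-- the graph is a forest -/
  acyclic : graph.IsAcyclic
  /-- a choice of root vertex for each connected component -/
  root : graph.ConnectedComponent → V
  /-- the chosen root belongs to its component -/
  root_mem : ∀ C : graph.ConnectedComponent, graph.connectedComponentMk (root C) = C

namespace RootedForest

/-- The rooted forest of a well-founded parent map. -/
noncomputable def ofParentMap (g : {g : V → Option V // WellFounded (IsParent g)}) :
    RootedForest V where
  graph := parentGraph g.1
  acyclic := isAcyclic_parentGraph g.2
  root := fun C ↦ ((rootEquiv g.2).symm C).1
  root_mem := (rootEquiv g.2).apply_symm_apply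

lemma root_ofParentMap_eq_self_iff (g : {g : V → Option V // WellFounded (IsParent g)}) {v : V} :
    (ofParentMap g).root ((ofParentMap g).graph.connectedComponentMk v) = v ↔ g.1 v = none := by
  refine ⟨fun h ↦ ?_, fun h ↦ ?_⟩
  · exact h ▸ ((rootEquiv g.2).symm _).2
  · exact congrArg Subtype.val ((rootEquiv g.2).symm_apply_apply ⟨v, h⟩)

lemma ofParentMap_injective : Function.Injective (ofParentMap (V := V)) := by
  intro g g' h
  refine Subtype.ext (eq_of_parentGraph_eq g.2 (congrArg graph h) fun v ↦ ?_)
  rw [← root_ofParentMap_eq_self_iff, ← root_ofParentMap_eq_self_iff, h]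

lemma ext_of_root_eq_self {F F' : RootedForest V} (hgraph : F.graph = F'.graph)
    (hroot : ∀ v, F.root (F.graph.connectedComponentMk v) = v →
      F'.root (F'.graph.connectedComponentMk v) = v) : F = F' := by
  obtain ⟨G, hG, root, root_mem⟩ := F
  obtain ⟨G', hG', root', root_mem'⟩ := F'
  obtain rfl : G = G' := hgraph
  obtain rfl : root = root' := by
    funext C
    have hC := hroot (root C) (congrArg root (root_mem C))
    exact hC.symm.trans (congrArg root' (root_mem C))
  rfl

lemma reachable_root (F : RootedForest V) (v : V) :
    F.graph.Reachable v (F.root (F.graph.connectedComponentMk v)) :=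
  (SimpleGraph.ConnectedComponent.exact (F.root_mem _)).symm

/-- The distance from a vertex to the root of its component. -/
noncomputable def depth (F : RootedForest V) (v : V) : ℕ :=
  F.graph.dist v (F.root (F.graph.connectedComponentMk v))

lemma exists_adj_depth_lt (F : RootedForest V) {v : V}
    (hv : F.root (F.graph.connectedComponentMk v) ≠ v) :
    ∃ u, F.graph.Adj v u ∧ F.depth u < F.depth v := by
  obtain ⟨w, hw⟩ := (F.reachable_root v).exists_walk_length_eq_dist
  have hnil : ¬w.Nil := SimpleGraph.Walk.not_nil_of_ne hv.symm
  have hadj := w.adj_snd hnil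
  have hcomp : F.graph.connectedComponentMk w.snd = F.graph.connectedComponentMk v :=
    SimpleGraph.ConnectedComponent.sound hadj.symm.reachable
  refine ⟨w.snd, hadj, ?_⟩
  calc F.depth w.snd ≤ w.tail.length := by rw [depth, hcomp]; exact SimpleGraph.dist_le _
    _ < w.length := by have := w.length_tail_add_one hnil; omega
    _ = F.depth v := hw

lemma exists_parentMap (F : RootedForest V) : ∃ g : V → Option V,
    (∀ v, g v = none ↔ F.root (F.graph.connectedComponentMk v) = v) ∧
    ∀ u v, IsParent g u v → F.graph.Adj v u ∧ F.depth u < F.depth v := by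
  classical
  choose! parent hparent using fun v ↦ F.exists_adj_depth_lt (v := v)
  refine ⟨fun v ↦ if F.root (F.graph.connectedComponentMk v) = v then none else some (parent v),
    fun v ↦ by simp, fun u v h ↦ ?_⟩
  obtain ⟨hv, rfl⟩ : F.root (F.graph.connectedComponentMk v) ≠ v ∧ parent v = u := by
    simpa [IsParent] using h
  exact hparent v hv

lemma ofParentMap_surjective : Function.Surjective (ofParentMap (V := V)) := by
  intro F
  obtain ⟨g, hroot, hparent⟩ := F.exists_parentMap
  have hg : WellFounded (IsParent g) :=
    Subrelation.wf (fun h ↦ (hparent _ _ h).2) (measure F.depth).wf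
  have hle : parentGraph g ≤ F.graph := by
    rintro u v ⟨-, h | h⟩
    exacts [(hparent _ _ h).1.symm, (hparent _ _ h).1]
  have hreach : (parentGraph g).Reachable = F.graph.Reachable := by
    ext u v
    refine ⟨.mono hle, fun huv ↦ ?_⟩
    obtain ⟨r, hr, hur⟩ := exists_reachable_parentGraph hg u
    obtain ⟨s, hs, hvs⟩ := exists_reachable_parentGraph hg v
    have hrs : F.graph.Reachable r s := (hur.mono hle).symm.trans (huv.trans (hvs.mono hle))
    obtain rfl : r = s := by
      rw [← (hroot r).1 hr, ← (hroot s).1 hs, SimpleGraph.ConnectedComponent.sound hrs]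
    exact hur.trans hvs.symm
  have hmax := (SimpleGraph.maximal_isAcyclic_iff_reachable_eq hle (isAcyclic_parentGraph hg)).2
    hreach
  refine ⟨⟨g, hg⟩, ext_of_root_eq_self (hmax.eq_of_le ⟨le_rfl, F.acyclic⟩ hle) fun v hv ↦ ?_⟩
  exact (hroot v).1 ((root_ofParentMap_eq_self_iff _).1 hv)

/-- Rooted forests correspond to well-founded parent maps. -/
noncomputable def parentMapEquiv :
    {g : V → Option V // WellFounded (IsParent g)} ≃ RootedForest V :=
  Equiv.ofBijective ofParentMap ⟨ofParentMap_injective, ofParentMap_surjective⟩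

noncomputable instance [Finite V] : Fintype (RootedForest V) :=
  have := Finite.of_equiv _ (parentMapEquiv (V := V))
  Fintype.ofFinite _

lemma card_connectedComponent_parentMapEquiv
    (g : {g : V → Option V // WellFounded (IsParent g)}) :
    Nat.card (parentMapEquiv g).graph.ConnectedComponent = Nat.card {v // g.1 v = none} :=
  (Nat.card_congr (rootEquiv g.2)).symm

lemma card_edgeSet_parentMapEquiv (g : {g : V → Option V // WellFounded (IsParent g)}) :
    Nat.card (parentMapEquiv g).graph.edgeSet = Nat.card {v // (g.1 v).isSome} :=
  (Nat.card_eq_of_bijective _ (parentEdge_bijective g.2)).symm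

end RootedForest

/-- The effect on parents of contracting the vertex `none : Option V` into its own parent `o`:
children of `none` move up to `o`, and become roots if `o = none` declares that vertex a root. -/
def contractNone (o : Option (Option V)) : Option (Option V) → Option V
  | some none => o.join
  | u => u.join

lemma contractNone_eq_some_iff {o w : Option (Option V)} {u : V} :
    contractNone o w = some u ↔ w = some (some u) ∨ w = some none ∧ o = some (some u) := by
  rcases w with _ | _ | w <;> simp [contractNone, Option.join_eq_some_iff]

lemma wellFounded_isParent_option_iff {g : Option V → Option (Option V)} :
    WellFounded (IsParent g) ↔
      g none ≠ some none ∧ WellFounded (IsParent (contractNone (g none) ∘ g ∘ some)) := by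
  refine ⟨fun hg ↦ ⟨hg.irrefl.irrefl none, ?_⟩, fun ⟨hnone, hcontr⟩ ↦ ?_⟩
  · refine Subrelation.wf (fun {u v} h ↦ ?_) (InvImage.wf some hg.transGen)
    obtain hv | ⟨hv, hu⟩ := contractNone_eq_some_iff.1 h
    · exact .single hv
    · exact .head hu (.single hv)
  · have acc_some (v : V) : Acc (IsParent g) (some v) := by
      induction v using hcontr.induction with
      | _ v ih =>
        refine ⟨_, fun w hw ↦ ?_⟩
        cases w with
        | some u => exact ih u (contractNone_eq_some_iff.2 (.inl hw))
        | none =>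
          refine ⟨_, fun u hu ↦ ?_⟩
          cases u with
          | none => exact absurd hu hnone
          | some u => exact ih u (contractNone_eq_some_iff.2 (.inr ⟨hw, hu⟩))
    have acc_none : Acc (IsParent g) none := by
      refine ⟨_, fun u hu ↦ ?_⟩
      cases u with
      | none => exact absurd hu hnone
      | some u => exact acc_some u
    exact ⟨Option.rec acc_none acc_some⟩

lemma wellFounded_isParent_map_iff (e : V ≃ W) (g : V → Option V) :
    WellFounded (IsParent (Option.map e ∘ g ∘ e.symm)) ↔ WellFounded (IsParent g) := by
  let iso : IsParent g ≃r IsParent (Option.map e ∘ g ∘ e.symm) :=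
    ⟨e, fun {u v} ↦ by simp [IsParent]⟩
  exact (iso.surjective.wellFounded_iff iso.map_rel_iff.symm).symm

variable [CommSemiring R] [Fintype T]

open Classical in
/-- The generating function of well-founded parent maps, in a refined form where each vertex
chooses a label in `T` of weight `x`, and `π` reads off the parent from the label. Allowing several
labels for one parent keeps the set of choices unchanged when a vertex is contracted. -/
noncomputable def parentSum [Fintype V] (π : T → Option V) (x : T → R) : R :=
  ∑ f : V → T with WellFounded (IsParent (π ∘ f)), ∏ v, x (f v)

lemma parentSum_map [Fintype V] [Fintype W] (e : V ≃ W) (π : T → Option V) (x : T → R) :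
    parentSum (Option.map e ∘ π) x = parentSum π x := by
  refine Finset.sum_equiv (e.symm.arrowCongr (.refl T)) (fun f ↦ ?_) fun f _ ↦ ?_
  · simp [← wellFounded_isParent_map_iff e, Function.comp_def]
  · exact (e.prod_comp fun w ↦ x (f w)).symm

open Classical in
lemma parentSum_option [Fintype V] (π : T → Option (Option V)) (x : T → R) :
    parentSum π x =
      ∑ t with π t ≠ some none, x t * parentSum (contractNone (π t) ∘ π) x := by
  simp only [parentSum, Finset.sum_filter]
  refine (Finset.sum_equiv (s := .univ) Equiv.piOptionEquivProd.symm (by simp)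
    fun _ _ ↦ rfl).symm.trans ?_
  rw [Fintype.sum_prod_type]
  refine Finset.sum_congr rfl fun t _ ↦ ?_
  simp only [wellFounded_isParent_option_iff, Fintype.prod_option, Function.comp_def,
    Equiv.piOptionEquivProd_symm_apply, ite_and, Finset.mul_sum, mul_ite, mul_zero]
  split_ifs <;> simp

open Classical in
lemma sum_contractNone_eq_none (π : T → Option (Option V)) (x : T → R) {o : Option (Option V)}
    (ho : o ≠ some none) :
    ∑ s with contractNone o (π s) = none, x s =
      ∑ s with π s = none, x s + if o = none then ∑ s with π s = some none, x s else 0 := by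
  simp only [Finset.sum_filter]
  rcases o with _ | _ | u
  · rw [if_pos rfl, ← Finset.sum_add_distrib]
    refine Finset.sum_congr rfl fun s _ ↦ ?_
    rcases π s with _ | _ | v <;> simp [contractNone]
  · exact absurd rfl ho
  · rw [if_neg (Option.some_ne_none _), add_zero]
    refine Finset.sum_congr rfl fun s _ ↦ ?_
    rcases π s with _ | _ | v <;> simp [contractNone]

open Classical in
lemma sum_mul_sum_contractNone_eq_none (π : T → Option (Option V)) (x : T → R) :
    ∑ t with π t ≠ some none, x t * ∑ s with contractNone (π t) (π s) = none, x s =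
      (∑ t with π t = none, x t) * ∑ t, x t := by
  set a := ∑ t with π t = none, x t with ha
  set b := ∑ t with π t = some none, x t
  have hsplit : ∑ t, x t = b + ∑ t with π t ≠ some none, x t :=
    (Finset.sum_filter_add_sum_filter_not _ _ _).symm
  have hroots : ∑ t with π t ≠ some none, x t * (if π t = none then b else 0) = a * b := by
    simp only [Finset.sum_filter, ha, Finset.sum_mul]
    refine Finset.sum_congr rfl fun t _ ↦ ?_
    rcases π t with _ | _ | v <;> simp
  calc ∑ t with π t ≠ some none, x t * ∑ s with contractNone (π t) (π s) = none, x s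
      = ∑ t with π t ≠ some none, x t * (a + if π t = none then b else 0) := by
        refine Finset.sum_congr rfl fun t ht ↦ ?_
        rw [sum_contractNone_eq_none π x (Finset.mem_filter.1 ht).2]
    _ = (∑ t with π t ≠ some none, x t) * a + a * b := by
        rw [← hroots, Finset.sum_mul, ← Finset.sum_add_distrib]
        simp only [mul_add]
    _ = a * ∑ t, x t := by rw [hsplit]; ring

lemma parentSum_of_isEmpty [Fintype V] [IsEmpty V] (π : T → Option V) (x : T → R) :
    parentSum π x = 1 := by
  classical
  have hwf (f : V → T) : WellFounded (IsParent (π ∘ f)) := ⟨isEmptyElim⟩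
  simp [parentSum, hwf]

theorem parentSum_eq [Fintype V] [Nonempty V] (π : T → Option V) (x : T → R) :
    parentSum π x = (∑ t with π t = none, x t) * (∑ t, x t) ^ (Fintype.card V - 1) := by
  classical
  refine Fintype.induction_empty_option (P := fun V _ ↦ Nonempty V → ∀ π : T → Option V,
    parentSum π x = (∑ t with π t = none, x t) * (∑ t, x t) ^ (Fintype.card V - 1))
    ?_ ?_ ?_ V ‹_› π
  · intro V W _ e ih hW π
    let := Fintype.ofEquiv W e.symm
    have := ih e.nonempty (Option.map e.symm ∘ π)
    rw [← Fintype.card_congr e, ← parentSum_map e.symm, this]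
    simp
  · exact fun h ↦ h.elim nofun
  · intro V _ ih _ π
    rw [parentSum_option, Fintype.card_option, Nat.add_sub_cancel]
    cases isEmpty_or_nonempty V with
    | inl hV =>
      have hπ (t : T) : π t ≠ some none ↔ π t = none := by
        rcases π t with _ | _ | v
        exacts [by simp, by simp, isEmptyElim v]
      simp [parentSum_of_isEmpty, hπ]
    | inr hV =>
      simp only [ih hV, ← mul_assoc, ← Finset.sum_mul, Function.comp_apply]
      rw [sum_mul_sum_contractNone_eq_none, mul_assoc, ← pow_succ',
        Nat.sub_add_cancel Fintype.card_pos]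

lemma prod_option_elim_const [Fintype V] (f : V → Option W) (p q : R) :
    ∏ v, (f v).elim q (fun _ ↦ p) =
      p ^ Nat.card {v // (f v).isSome} * q ^ Nat.card {v // f v = none} := by
  classical
  have helim (o : Option W) : o.elim q (fun _ ↦ p) = if o.isSome then p else q := by
    cases o <;> rfl
  simp only [helim, Finset.prod_ite, Finset.prod_const, Nat.card_eq_fintype_card,
    Fintype.card_subtype, Option.not_isSome_iff_eq_none]

/-- The colourings of a given rooted forest are chosen independently of its structure. -/
def RootedPQForest.equivSigma (n p q : ℕ) :
    RootedPQForest n p q ≃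
      Σ F : RootedForest (Fin n),
        (F.graph.edgeSet → Fin p) × (F.graph.ConnectedComponent → Fin q) where
  toFun F := ⟨⟨F.graph, F.acyclic, F.root, F.root_mem⟩, F.edgeColor, F.rootColor⟩
  invFun F := ⟨F.1.graph, F.1.acyclic, F.1.root, F.1.root_mem, F.2.1, F.2.2⟩

lemma RootedPQForest.card_eq_sum (n p q : ℕ) :
    Nat.card (RootedPQForest n p q) = ∑ F : RootedForest (Fin n),
      p ^ Nat.card F.graph.edgeSet * q ^ Nat.card F.graph.ConnectedComponent := by
  rw [Nat.card_congr (equivSigma n p q), Nat.card_sigma]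
  simp only [Nat.card_prod, Nat.card_fun, Nat.card_fin]

theorem card_rootedPQForest_general [Fintype V] [Nonempty V] (p q : R) :
    ∑ F : RootedForest V, p ^ Nat.card F.graph.edgeSet * q ^ Nat.card F.graph.ConnectedComponent =
      q * (q + Fintype.card V * p) ^ (Fintype.card V - 1) := by
  classical
  let x : Option V → R := fun o ↦ o.elim q fun _ ↦ p
  calc _ = ∑ g : {g : V → Option V // WellFounded (IsParent g)}, ∏ v, x (g.1 v) := by
        rw [← RootedForest.parentMapEquiv.sum_comp]
        simp only [RootedForest.card_edgeSet_parentMapEquiv,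
          RootedForest.card_connectedComponent_parentMapEquiv, ← prod_option_elim_const, x]
    _ = parentSum id x := by
        rw [parentSum, Finset.sum_subtype (p := fun g ↦ WellFounded (IsParent g))]
        simp
    _ = (∑ o with id o = none, x o) * (∑ o, x o) ^ (Fintype.card V - 1) := parentSum_eq id x
    _ = q * (q + Fintype.card V * p) ^ (Fintype.card V - 1) := by
        simp [x, Fintype.sum_option, Finset.sum_filter]

theorem card_rootedPQForest (n p q : ℕ) (hn : 0 < n) (hp : 0 < p) (hq : 0 < q) :
    Nat.card (RootedPQForest n p q) = q * (q + n * p) ^ (n - 1) := by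
  have : Nonempty (Fin n) := ⟨⟨0, hn⟩⟩
  simpa [RootedPQForest.card_eq_sum] using card_rootedPQForest_general (V := Fin n) p q
end
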